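/- arXiv:0910.2055 — 2 statements merged into one kernel-verified Lean document; each statement's English description precedes it below -/
import Mathlib

section
/- There exist a 32-dimensional real inner product space V, a lattice Υ in V such that √2·Υ is even unimodular with minimum norm 4, and a polarization M, N of Υ (integral sublattices with M + N = Υ and M ∩ N = 2Υ) such that M and N are both rank 32 even unimodular lattices, μ(M) = 4, and μ(N) ∈ {2, 4}. -/
noncomputable section

open scoped RealInnerProductSpace Pointwise
open Module

variable {V : Type*} [NormedAddCommGroup V] [InnerProductSpace ℝ V]

/-- `L` is a (full) lattice in `V`: a finitely generated `ℤ`-submodule spanning `V` over `ℝ`. -/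
def IsLat (L : Submodule ℤ V) : Prop :=
  L.FG ∧ Submodule.span ℝ (L : Set V) = ⊤

/-- The lattice `L` is integral: all inner products of lattice vectors are integers. -/
def IsIntegralLat (L : Submodule ℤ V) : Prop :=
  ∀ x ∈ L, ∀ y ∈ L, ∃ n : ℤ, ⟪x, y⟫ = (n : ℝ)

/-- The lattice `L` is even: it is integral and all norms are even integers. -/
def IsEvenLat (L : Submodule ℤ V) : Prop :=
  IsIntegralLat L ∧ ∀ x ∈ L, ∃ n : ℤ, ⟪x, x⟫ = 2 * (n : ℝ)

/-- The lattice `L` is unimodular: the Gram matrix of some `ℤ`-basis has determinant 1. -/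
def IsUnimodularLat (L : Submodule ℤ V) : Prop :=
  ∃ (n : ℕ) (b : Basis (Fin n) ℤ L),
    (Matrix.of fun i j : Fin n => ⟪(b i : V), (b j : V)⟫).det = 1

/-- The minimum norm `μ(L)` of a lattice. -/
def minNorm (L : Submodule ℤ V) : ℝ :=
  sInf {r : ℝ | ∃ x ∈ L, x ≠ 0 ∧ ⟪x, x⟫ = r}

/-- `√2·Υ` is an even unimodular lattice: all norms of `Υ` are integers, all doubled inner
products are integers, and the Gram matrix of the form `2⟪·,·⟫` on a `ℤ`-basis of `Υ` has
determinant 1. -/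
def SqrtTwoEvenUnimod (Υ : Submodule ℤ V) : Prop :=
  (∀ x ∈ Υ, ∃ n : ℤ, ⟪x, x⟫ = (n : ℝ)) ∧
  (∀ x ∈ Υ, ∀ y ∈ Υ, ∃ n : ℤ, 2 * ⟪x, y⟫ = (n : ℝ)) ∧
  ∃ (n : ℕ) (b : Basis (Fin n) ℤ Υ),
    (Matrix.of fun i j : Fin n => 2 * ⟪(b i : V), (b j : V)⟫).det = 1

/-- `M, N` is a polarization of `Υ`: a pair of integral sublattices with
`M + N = Υ` and `M ∩ N = 2Υ`. -/
def IsPolarization (Υ M N : Submodule ℤ V) : Prop :=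
  M ≤ Υ ∧ N ≤ Υ ∧ IsIntegralLat M ∧ IsIntegralLat N ∧ M ⊔ N = Υ ∧ M ⊓ N = (2 : ℤ) • Υ

/-- The sublattice `L_M = {(x_1,…,x_k) ∈ M^k : x_1+⋯+x_k ∈ M ∩ N}` of `V^k`. -/
def LsubM (M N : Submodule ℤ V) (k : ℕ) : Submodule ℤ (PiLp 2 fun _ : Fin k => V) where
  carrier := {v | (∀ i, v i ∈ M) ∧ (∑ i, v i) ∈ M ⊓ N}
  add_mem' := fun {a b} ha hb =>
    ⟨fun i => M.add_mem (ha.1 i) (hb.1 i), by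
      have h : (∑ i, (a + b) i) = (∑ i, a i) + ∑ i, b i :=
        (Finset.sum_congr rfl fun i _ => rfl).trans Finset.sum_add_distrib
      rw [h]; exact (M ⊓ N).add_mem ha.2 hb.2⟩
  zero_mem' := ⟨fun _ => M.zero_mem, by
      have h : (∑ i : Fin k, (0 : PiLp 2 fun _ : Fin k => V) i) = 0 :=
        Finset.sum_eq_zero fun _ _ => rfl
      rw [h]; exact (M ⊓ N).zero_mem⟩
  smul_mem' := fun c a ha =>
    ⟨fun i => M.smul_mem c (ha.1 i), by
      have h : (∑ i, (c • a) i) = c • ∑ i, a i := by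
        show (∑ i, c • a i) = c • ∑ i, a i
        exact Finset.smul_sum.symm
      rw [h]; exact (M ⊓ N).smul_mem c ha.2⟩

/-- The diagonal sublattice `L^N = {(y,…,y) : y ∈ N}` of `V^k`. -/
def LsupN (N : Submodule ℤ V) (k : ℕ) : Submodule ℤ (PiLp 2 fun _ : Fin k => V) where
  carrier := {v | ∃ y ∈ N, ∀ i, v i = y}
  add_mem' := fun {a b} ha hb => by
    obtain ⟨ya, hya, ha⟩ := ha
    obtain ⟨yb, hyb, hb⟩ := hb
    exact ⟨ya + yb, N.add_mem hya hyb, fun i => by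
      show a i + b i = ya + yb
      rw [ha i, hb i]⟩
  zero_mem' := ⟨0, N.zero_mem, fun _ => rfl⟩
  smul_mem' := fun c a ha => by
    obtain ⟨y, hy, h⟩ := ha
    exact ⟨c • y, N.smul_mem c hy, fun i => by
      show c • a i = c • y
      rw [h i]⟩

/-- The lattice `L(M,N,k) = L_M + L^N ⊆ V^k`. -/
def LMN (M N : Submodule ℤ V) (k : ℕ) : Submodule ℤ (PiLp 2 fun _ : Fin k => V) :=
  LsubM M N k ⊔ LsupN N k

/-- The Leech polarization setup: `V` is 24-dimensional, `√2·Υ` is even unimodular with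
minimum norm 4, and `M, N` is a polarization of `Υ` by two copies of the Leech lattice. -/
def LeechSetup (Υ M N : Submodule ℤ V) : Prop :=
  Module.finrank ℝ V = 24 ∧ IsLat Υ ∧ SqrtTwoEvenUnimod Υ ∧
  (∀ v ∈ Υ, v ≠ 0 → 4 ≤ 2 * ⟪v, v⟫) ∧
  IsPolarization Υ M N ∧
  IsLat M ∧ IsEvenLat M ∧ IsUnimodularLat M ∧ minNorm M = 4 ∧
  IsLat N ∧ IsEvenLat N ∧ IsUnimodularLat N ∧ minNorm N = 4

/-- `(w,x,y,z) ∈ N × M × M × M` is admissible if `x + y + z ∈ M ∩ N`. -/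
def Admissible (M N : Submodule ℤ V) (w x y z : V) : Prop :=
  w ∈ N ∧ x ∈ M ∧ y ∈ M ∧ z ∈ M ∧ x + y + z ∈ M ⊓ N

/-- An offender is an admissible quadruple all three of whose associated vectors
`w+x, w+y, w+z` have norm 2. -/
def Offender (M N : Submodule ℤ V) (w x y z : V) : Prop :=
  Admissible M N w x y z ∧
  ⟪w + x, w + x⟫ = 2 ∧ ⟪w + y, w + y⟫ = 2 ∧ ⟪w + z, w + z⟫ = 2

/-- A super offender is an offender with `⟪w,w⟫ = 4` whose multiset of norms
`{⟪x,x⟫, ⟪y,y⟫, ⟪z,z⟫}` equals `{6,6,4}`. -/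
def SuperOffender (M N : Submodule ℤ V) (w x y z : V) : Prop :=
  Offender M N w x y z ∧ ⟪w, w⟫ = 4 ∧
  ({⟪x, x⟫, ⟪y, y⟫, ⟪z, z⟫} : Multiset ℝ) = ({6, 6, 4} : Multiset ℝ)

open Matrix

/-- Table. -/
def tE : List (List ℤ) :=
  [[1,1,1,1,1,-1,-1,-1],
  [1,2,0,1,-1,0,0,-1],
  [1,1,2,0,-1,-1,0,0],
  [1,0,1,2,-1,0,-1,0],
  [2,0,0,0,-2,0,0,0],
  [0,0,2,0,0,0,-2,0],
  [0,0,0,2,0,0,0,-2],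
  [0,2,0,0,0,-2,0,0]]

/-- Table. -/
def tA : List (List ℤ) :=
  [[2,1,1,0,-1,-1,-2,-2],
  [0,1,1,0,-1,0,-1,0],
  [0,0,0,0,0,1,-1,0],
  [1,1,-1,1,0,0,-2,0],
  [-1,1,-1,-1,1,2,0,1],
  [1,1,-1,1,-1,0,-2,-1],
  [1,1,1,1,-1,-1,-1,-1],
  [1,-1,1,-1,0,0,0,0]]

/-- Table. -/
def tG8 : List (List ℤ) :=
  [[2,1,1,1,0,1,1,1],
  [1,2,1,1,1,0,1,1],
  [1,1,2,1,1,1,0,1],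
  [1,1,1,2,1,1,1,0],
  [0,1,1,1,2,0,0,0],
  [1,0,1,1,0,2,0,0],
  [1,1,0,1,0,0,2,0],
  [1,1,1,0,0,0,0,2]]

/-- Table. -/
def tB : List (List ℤ) :=
  [[1,1,1,1,1,-1,-1,-1,1,1,1,1,1,-1,-1,-1,1,1,1,1,1,-1,-1,-1,1,1,1,1,1,-1,-1,-1],
  [1,2,0,1,-1,0,0,-1,1,2,0,1,-1,0,0,-1,1,2,0,1,-1,0,0,-1,1,2,0,1,-1,0,0,-1],
  [1,1,2,0,-1,-1,0,0,1,1,2,0,-1,-1,0,0,1,1,2,0,-1,-1,0,0,1,1,2,0,-1,-1,0,0],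
  [1,0,1,2,-1,0,-1,0,1,0,1,2,-1,0,-1,0,1,0,1,2,-1,0,-1,0,1,0,1,2,-1,0,-1,0],
  [2,0,0,0,-2,0,0,0,2,0,0,0,-2,0,0,0,2,0,0,0,-2,0,0,0,2,0,0,0,-2,0,0,0],
  [0,0,2,0,0,0,-2,0,0,0,2,0,0,0,-2,0,0,0,2,0,0,0,-2,0,0,0,2,0,0,0,-2,0],
  [0,0,0,2,0,0,0,-2,0,0,0,2,0,0,0,-2,0,0,0,2,0,0,0,-2,0,0,0,2,0,0,0,-2],
  [0,2,0,0,0,-2,0,0,0,2,0,0,0,-2,0,0,0,2,0,0,0,-2,0,0,0,2,0,0,0,-2,0,0],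
  [0,0,0,0,0,0,0,0,2,1,2,-1,2,1,0,1,0,0,0,0,0,0,0,0,2,1,2,-1,2,1,0,1],
  [0,0,0,0,0,0,0,0,0,3,2,-1,0,-1,0,1,0,0,0,0,0,0,0,0,0,3,2,-1,0,-1,0,1],
  [0,0,0,0,0,0,0,0,0,0,2,-2,0,0,-2,2,0,0,0,0,0,0,0,0,0,0,2,-2,0,0,-2,2],
  [0,0,0,0,0,0,0,0,2,2,0,0,0,0,-2,2,0,0,0,0,0,0,0,0,2,2,0,0,0,0,-2,2],
  [0,0,0,0,0,0,0,0,0,2,0,-2,-2,0,-2,0,0,0,0,0,0,0,0,0,0,2,0,-2,-2,0,-2,0],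
  [0,0,0,0,0,0,0,0,0,0,0,0,2,2,-2,2,0,0,0,0,0,0,0,0,0,0,0,0,2,2,-2,2],
  [0,0,0,0,0,0,0,0,2,2,2,2,0,0,0,0,0,0,0,0,0,0,0,0,2,2,2,2,0,0,0,0],
  [0,0,0,0,0,0,0,0,0,0,2,-2,2,-2,0,0,0,0,0,0,0,0,0,0,0,0,2,-2,2,-2,0,0],
  [0,0,0,0,0,0,0,0,0,0,0,0,0,0,0,0,-2,-1,-2,1,-2,-1,0,-1,2,1,2,-1,2,1,0,1],
  [0,0,0,0,0,0,0,0,0,0,0,0,0,0,0,0,0,-3,-2,1,0,1,0,-1,0,3,2,-1,0,-1,0,1],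
  [0,0,0,0,0,0,0,0,0,0,0,0,0,0,0,0,0,0,-2,2,0,0,2,-2,0,0,2,-2,0,0,-2,2],
  [0,0,0,0,0,0,0,0,0,0,0,0,0,0,0,0,-2,-2,0,0,0,0,2,-2,2,2,0,0,0,0,-2,2],
  [0,0,0,0,0,0,0,0,0,0,0,0,0,0,0,0,0,-2,0,2,2,0,2,0,0,2,0,-2,-2,0,-2,0],
  [0,0,0,0,0,0,0,0,0,0,0,0,0,0,0,0,0,0,0,0,-2,-2,2,-2,0,0,0,0,2,2,-2,2],
  [0,0,0,0,0,0,0,0,0,0,0,0,0,0,0,0,-2,-2,-2,-2,0,0,0,0,2,2,2,2,0,0,0,0],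
  [0,0,0,0,0,0,0,0,0,0,0,0,0,0,0,0,0,0,-2,2,-2,2,0,0,0,0,2,-2,2,-2,0,0],
  [0,0,0,0,0,0,0,0,0,0,0,0,0,0,0,0,2,2,2,2,2,-2,-2,-2,0,0,0,0,0,0,0,0],
  [0,0,0,0,0,0,0,0,0,0,0,0,0,0,0,0,2,4,0,2,-2,0,0,-2,0,0,0,0,0,0,0,0],
  [0,0,0,0,0,0,0,0,0,0,0,0,0,0,0,0,2,2,4,0,-2,-2,0,0,0,0,0,0,0,0,0,0],
  [0,0,0,0,0,0,0,0,0,0,0,0,0,0,0,0,2,0,2,4,-2,0,-2,0,0,0,0,0,0,0,0,0],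
  [0,0,0,0,0,0,0,0,0,0,0,0,0,0,0,0,4,0,0,0,-4,0,0,0,0,0,0,0,0,0,0,0],
  [0,0,0,0,0,0,0,0,0,0,0,0,0,0,0,0,0,0,4,0,0,0,-4,0,0,0,0,0,0,0,0,0],
  [0,0,0,0,0,0,0,0,0,0,0,0,0,0,0,0,0,0,0,4,0,0,0,-4,0,0,0,0,0,0,0,0],
  [0,0,0,0,0,0,0,0,0,0,0,0,0,0,0,0,0,4,0,0,0,-4,0,0,0,0,0,0,0,0,0,0]]

/-- Table. -/
def tG : List (List ℤ) :=
  [[4,2,2,2,0,2,2,2,1,1,0,1,0,0,2,1,0,0,0,0,0,0,0,0,2,1,1,1,0,1,1,1],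
  [2,4,2,2,2,0,2,2,0,1,-1,1,1,-1,2,-1,0,0,0,0,0,0,0,0,1,2,1,1,1,0,1,1],
  [2,2,4,2,2,2,0,2,1,2,1,1,1,-1,2,1,0,0,0,0,0,0,0,0,1,1,2,1,1,1,0,1],
  [2,2,2,4,2,2,2,0,0,0,0,1,0,0,2,-1,0,0,0,0,0,0,0,0,1,1,1,2,1,1,1,0],
  [0,2,2,2,4,0,0,0,0,0,0,1,1,-1,1,-1,0,0,0,0,0,0,0,0,0,1,1,1,2,0,0,0],
  [2,0,2,2,0,4,0,0,1,1,2,1,1,1,1,1,0,0,0,0,0,0,0,0,1,0,1,1,0,2,0,0],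
  [2,2,0,2,0,0,4,0,-1,-1,-2,-1,-1,-1,1,-1,0,0,0,0,0,0,0,0,1,1,0,1,0,0,2,0],
  [2,2,2,0,0,0,0,4,0,2,0,1,1,-1,1,1,0,0,0,0,0,0,0,0,1,1,1,0,0,0,0,2],
  [1,0,1,0,0,1,-1,0,4,2,2,2,0,2,2,2,2,1,1,1,0,1,1,1,0,0,0,0,0,0,0,0],
  [1,1,2,0,0,1,-1,2,2,4,2,2,2,0,2,2,1,2,1,1,1,0,1,1,0,0,0,0,0,0,0,0],
  [0,-1,1,0,0,2,-2,0,2,2,4,2,2,2,0,2,1,1,2,1,1,1,0,1,0,0,0,0,0,0,0,0],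
  [1,1,1,1,1,1,-1,1,2,2,2,4,2,2,2,0,1,1,1,2,1,1,1,0,0,0,0,0,0,0,0,0],
  [0,1,1,0,1,1,-1,1,0,2,2,2,4,0,0,0,0,1,1,1,2,0,0,0,0,0,0,0,0,0,0,0],
  [0,-1,-1,0,-1,1,-1,-1,2,0,2,2,0,4,0,0,1,0,1,1,0,2,0,0,0,0,0,0,0,0,0,0],
  [2,2,2,2,1,1,1,1,2,2,0,2,0,0,4,0,1,1,0,1,0,0,2,0,0,0,0,0,0,0,0,0],
  [1,-1,1,-1,-1,1,-1,1,2,2,2,0,0,0,0,4,1,1,1,0,0,0,0,2,0,0,0,0,0,0,0,0],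
  [0,0,0,0,0,0,0,0,2,1,1,1,0,1,1,1,4,2,2,2,0,2,2,2,-1,0,-1,0,0,-1,1,0],
  [0,0,0,0,0,0,0,0,1,2,1,1,1,0,1,1,2,4,2,2,2,0,2,2,-1,-1,-2,0,0,-1,1,-2],
  [0,0,0,0,0,0,0,0,1,1,2,1,1,1,0,1,2,2,4,2,2,2,0,2,0,1,-1,0,0,-2,2,0],
  [0,0,0,0,0,0,0,0,1,1,1,2,1,1,1,0,2,2,2,4,2,2,2,0,-1,-1,-1,-1,-1,-1,1,-1],
  [0,0,0,0,0,0,0,0,0,1,1,1,2,0,0,0,0,2,2,2,4,0,0,0,0,-1,-1,0,-1,-1,1,-1],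
  [0,0,0,0,0,0,0,0,1,0,1,1,0,2,0,0,2,0,2,2,0,4,0,0,0,1,1,0,1,-1,1,1],
  [0,0,0,0,0,0,0,0,1,1,0,1,0,0,2,0,2,2,0,2,0,0,4,0,-2,-2,-2,-2,-1,-1,-1,-1],
  [0,0,0,0,0,0,0,0,1,1,1,0,0,0,0,2,2,2,2,0,0,0,0,4,-1,1,-1,1,1,-1,1,-1],
  [2,1,1,1,0,1,1,1,0,0,0,0,0,0,0,0,-1,-1,0,-1,0,0,-2,-1,4,2,2,2,0,2,2,2],
  [1,2,1,1,1,0,1,1,0,0,0,0,0,0,0,0,0,-1,1,-1,-1,1,-2,1,2,4,2,2,2,0,2,2],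
  [1,1,2,1,1,1,0,1,0,0,0,0,0,0,0,0,-1,-2,-1,-1,-1,1,-2,-1,2,2,4,2,2,2,0,2],
  [1,1,1,2,1,1,1,0,0,0,0,0,0,0,0,0,0,0,0,-1,0,0,-2,1,2,2,2,4,2,2,2,0],
  [0,1,1,1,2,0,0,0,0,0,0,0,0,0,0,0,0,0,0,-1,-1,1,-1,1,0,2,2,2,4,0,0,0],
  [1,0,1,1,0,2,0,0,0,0,0,0,0,0,0,0,-1,-1,-2,-1,-1,-1,-1,-1,2,0,2,2,0,4,0,0],
  [1,1,0,1,0,0,2,0,0,0,0,0,0,0,0,0,1,1,2,1,1,1,-1,1,2,2,0,2,0,0,4,0],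
  [1,1,1,0,0,0,0,2,0,0,0,0,0,0,0,0,0,-2,0,-1,-1,1,-1,-1,2,2,2,0,0,0,0,4]]

/-- Table. -/
def tH : List (List ℤ) :=
  [[4,0,0,0,0,-2,-2,-2,-1,1,1,-1,0,0,0,-1,0,0,0,0,0,0,0,0,-2,0,0,0,0,1,1,1],
  [0,4,0,0,-2,0,-2,-2,-1,-1,1,1,-1,-1,0,1,0,0,0,0,0,0,0,0,0,-2,0,0,1,0,1,1],
  [0,0,4,0,-2,-2,0,-2,-1,-1,-1,1,1,1,0,1,0,0,0,0,0,0,0,0,0,0,-2,0,1,1,0,1],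
  [0,0,0,4,-2,-2,-2,0,1,-1,-1,-1,2,0,0,1,0,0,0,0,0,0,0,0,0,0,0,-2,1,1,1,0],
  [0,-2,-2,-2,4,2,2,2,0,2,0,-1,-1,1,0,-1,0,0,0,0,0,0,0,0,0,1,1,1,-2,-1,-1,-1],
  [-2,0,-2,-2,2,4,2,2,1,1,0,1,-2,-1,-1,-1,0,0,0,0,0,0,0,0,1,0,1,1,-1,-2,-1,-1],
  [-2,-2,0,-2,2,2,4,2,1,1,0,1,-1,0,-1,-1,0,0,0,0,0,0,0,0,1,1,0,1,-1,-1,-2,-1],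
  [-2,-2,-2,0,2,2,2,4,2,0,0,-1,0,0,0,-1,0,0,0,0,0,0,0,0,1,1,1,0,-1,-1,-1,-2],
  [-1,-1,-1,1,0,1,1,2,4,0,0,0,0,-2,-2,-2,-2,0,0,0,0,1,1,1,0,0,0,0,0,0,0,0],
  [1,-1,-1,-1,2,1,1,0,0,4,0,0,-2,0,-2,-2,0,-2,0,0,1,0,1,1,0,0,0,0,0,0,0,0],
  [1,1,-1,-1,0,0,0,0,0,0,4,0,-2,-2,0,-2,0,0,-2,0,1,1,0,1,0,0,0,0,0,0,0,0],
  [-1,1,1,-1,-1,1,1,-1,0,0,0,4,-2,-2,-2,0,0,0,0,-2,1,1,1,0,0,0,0,0,0,0,0,0],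
  [0,-1,1,2,-1,-2,-1,0,0,-2,-2,-2,4,2,2,2,0,1,1,1,-2,-1,-1,-1,0,0,0,0,0,0,0,0],
  [0,-1,1,0,1,-1,0,0,-2,0,-2,-2,2,4,2,2,1,0,1,1,-1,-2,-1,-1,0,0,0,0,0,0,0,0],
  [0,0,0,0,0,-1,-1,0,-2,-2,0,-2,2,2,4,2,1,1,0,1,-1,-1,-2,-1,0,0,0,0,0,0,0,0],
  [-1,1,1,1,-1,-1,-1,-1,-2,-2,-2,0,2,2,2,4,1,1,1,0,-1,-1,-1,-2,0,0,0,0,0,0,0,0],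
  [0,0,0,0,0,0,0,0,-2,0,0,0,0,1,1,1,4,0,0,0,0,-2,-2,-2,1,1,1,-1,0,-1,-1,-2],
  [0,0,0,0,0,0,0,0,0,-2,0,0,1,0,1,1,0,4,0,0,-2,0,-2,-2,-1,1,1,1,-2,-1,-1,0],
  [0,0,0,0,0,0,0,0,0,0,-2,0,1,1,0,1,0,0,4,0,-2,-2,0,-2,-1,-1,1,1,0,0,0,0],
  [0,0,0,0,0,0,0,0,0,0,0,-2,1,1,1,0,0,0,0,4,-2,-2,-2,0,1,-1,-1,1,1,-1,-1,1],
  [0,0,0,0,0,0,0,0,0,1,1,1,-2,-1,-1,-1,0,-2,-2,-2,4,2,2,2,0,1,-1,-2,1,2,1,0],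
  [0,0,0,0,0,0,0,0,1,0,1,1,-1,-2,-1,-1,-2,0,-2,-2,2,4,2,2,0,1,-1,0,-1,1,0,0],
  [0,0,0,0,0,0,0,0,1,1,0,1,-1,-1,-2,-1,-2,-2,0,-2,2,2,4,2,0,0,0,0,0,1,1,0],
  [0,0,0,0,0,0,0,0,1,1,1,0,-1,-1,-1,-2,-2,-2,-2,0,2,2,2,4,1,-1,-1,-1,1,1,1,1],
  [-2,0,0,0,0,1,1,1,0,0,0,0,0,0,0,0,1,-1,-1,1,0,0,0,1,4,0,0,0,0,-2,-2,-2],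
  [0,-2,0,0,1,0,1,1,0,0,0,0,0,0,0,0,1,1,-1,-1,1,1,0,-1,0,4,0,0,-2,0,-2,-2],
  [0,0,-2,0,1,1,0,1,0,0,0,0,0,0,0,0,1,1,1,-1,-1,-1,0,-1,0,0,4,0,-2,-2,0,-2],
  [0,0,0,-2,1,1,1,0,0,0,0,0,0,0,0,0,-1,1,1,1,-2,0,0,-1,0,0,0,4,-2,-2,-2,0],
  [0,1,1,1,-2,-1,-1,-1,0,0,0,0,0,0,0,0,0,-2,0,1,1,-1,0,1,0,-2,-2,-2,4,2,2,2],
  [1,0,1,1,-1,-2,-1,-1,0,0,0,0,0,0,0,0,-1,-1,0,-1,2,1,1,1,-2,0,-2,-2,2,4,2,2],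
  [1,1,0,1,-1,-1,-2,-1,0,0,0,0,0,0,0,0,-1,-1,0,-1,1,0,1,1,-2,-2,0,-2,2,2,4,2],
  [1,1,1,0,-1,-1,-1,-2,0,0,0,0,0,0,0,0,-2,0,0,1,0,0,0,1,-2,-2,-2,0,2,2,2,4]]

/-- Entry lookup turning an integer table into a matrix. -/
def tbl (t : List (List ℤ)) (m n : ℕ) : Matrix (Fin m) (Fin n) ℤ :=
  fun i j => (t.getD i.1 []).getD j.1 0

/-- Twice a basis of the `E8` lattice. -/
def mE : Matrix (Fin 8) (Fin 8) ℤ := tbl tE 8 8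
/-- Multiplication by `(1 + √-7)/2` on `E8`. -/
def mA8 : Matrix (Fin 8) (Fin 8) ℤ := tbl tA 8 8
/-- Four times a basis of the lattice of rank 32. -/
def mB : Matrix (Fin 32) (Fin 32) ℤ := tbl tB 32 32
/-- The Gram matrix. -/
def mG : Matrix (Fin 32) (Fin 32) ℤ := tbl tG 32 32
/-- The inverse Gram matrix. -/
def mH : Matrix (Fin 32) (Fin 32) ℤ := tbl tH 32 32
/-- Multiplication by `(1 + √-7)/2`, blockwise. -/
def mA : Matrix (Fin 32) (Fin 32) ℤ := fun i j =>
  if i.1 / 8 = j.1 / 8 then (tA.getD (i.1 % 8) []).getD (j.1 % 8) 0 else 0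
/-- The conjugate of `mA`. -/
def mA' : Matrix (Fin 32) (Fin 32) ℤ := 1 - mA

/-- Half of an even symmetric matrix. -/
def halfM {n : ℕ} (G : Matrix (Fin n) (Fin n) ℤ) : Matrix (Fin n) (Fin n) ℤ := fun i j =>
  if i < j then G i j else if i = j then G i j / 2 else 0

/-- Blocks. -/
def tK1 : List (List ℤ) := [[1, 1, 1, 1], [], [], [0, 0, 2, 0]]
/-- Blocks. -/
def tK2 : List (List ℤ) := [[], [0, 1, 0, 1], [0, 0, -1, 1], []]

/-- Coordinates, in `E8`, of the `k`-th component. -/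
def mF (k : Fin 4) : Matrix (Fin 32) (Fin 8) ℤ := fun i j =>
  (tK1.getD (i.1 / 8) []).getD k.1 0 * (if i.1 % 8 = j.1 then 1 else 0) +
  (tK2.getD (i.1 / 8) []).getD k.1 0 * (tA.getD (i.1 % 8) []).getD j.1 0

/-- Differences of components, divided by `(1 + √-7)/2`. -/
def mD (k : Fin 4) : Matrix (Fin 32) (Fin 8) ℤ := fun i j =>
  (tK2.getD (i.1 / 8) []).getD k.1 0 * (if i.1 % 8 = j.1 then 1 else 0) +
  (if i.1 / 8 = 3 ∧ k.1 = 2 then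
    (if i.1 % 8 = j.1 then 1 else 0) - (tA.getD (i.1 % 8) []).getD j.1 0 else 0)

/-- Half of the alternating sum of the components. -/
def mN : Matrix (Fin 32) (Fin 8) ℤ := fun i j =>
  if i.1 / 8 = 2 then (tA.getD (i.1 % 8) []).getD j.1 0
  else if i.1 / 8 = 3 then (if i.1 % 8 = j.1 then -1 else 0) else 0

/-- The position of the `j`-th coordinate of the `k`-th component. -/
def pos (k : Fin 4) (j : Fin 8) : Fin 32 := ⟨8 * k.1 + j.1, by omega⟩

lemma check_BB : ∀ i j, (mB * mBᵀ) i j = 8 * mG i j := by decide +kernel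
lemma check_GH : ∀ i j, (mG * mH) i j = if i = j then (1 : ℤ) else 0 := by decide +kernel
lemma check_AG : ∀ i j, (mA * mG) i j = (mG * mA'ᵀ) i j := by decide +kernel
lemma check_AA : ∀ i j, (mA * mA') i j = if i = j then (2 : ℤ) else 0 := by decide +kernel
lemma check_G : ∀ i j, mG i j - halfM mG i j - halfM mG j i = 0 := by decide +kernel
lemma check_EE : ∀ i j, (mE * mEᵀ) i j =
    4 * (halfM (tbl tG8 8 8) i j + halfM (tbl tG8 8 8) j i) := by decide +kernel
lemma check_AE : ∀ i j, ((mA8 * mE) * (mA8 * mE)ᵀ) i j = 2 * (mE * mEᵀ) i j := by decide +kernel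
lemma check_F : ∀ k i j, mB i (pos k j) = (mF k * mE) i j := by decide +kernel
lemma check_D : ∀ k i j, mF k i j - mF 0 i j = (mD k * mA8) i j := by decide +kernel
lemma check_N : ∀ i j, mF 0 i j - mF 1 i j - mF 2 i j + mF 3 i j = 2 * mN i j := by decide +kernel

lemma BB_eq : mB * mBᵀ = (8 : ℤ) • mG := by
  ext i j; rw [check_BB]; simp
lemma GH_eq : mG * mH = 1 := by
  ext i j; rw [check_GH, Matrix.one_apply]
lemma AG_eq : mA * mG = mG * mA'ᵀ := by
  ext i j; rw [check_AG]
lemma AA'_eq : mA * mA' = (2 : ℤ) • (1 : Matrix (Fin 32) (Fin 32) ℤ) := by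
  ext i j; rw [check_AA]; simp [Matrix.one_apply]
lemma A'A_eq : mA' * mA = (2 : ℤ) • (1 : Matrix (Fin 32) (Fin 32) ℤ) := by
  rw [← AA'_eq]; simp [mA', mul_sub, sub_mul]
lemma G_half : mG = halfM mG + (halfM mG)ᵀ := by
  ext i j; have := check_G i j; simp only [Matrix.add_apply, Matrix.transpose_apply]; linarith
lemma G_symm : mGᵀ = mG := by
  rw [G_half]; simp [add_comm]
lemma AGA_eq : mA * mG * mAᵀ = (2 : ℤ) • mG := by
  rw [AG_eq, Matrix.mul_assoc, ← Matrix.transpose_mul, AA'_eq, Matrix.transpose_smul,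
    Matrix.transpose_one, Matrix.mul_smul, Matrix.mul_one]
lemma A'GA'_eq : mA' * mG * mA'ᵀ = (2 : ℤ) • mG := by
  rw [Matrix.mul_assoc, ← AG_eq, ← Matrix.mul_assoc, A'A_eq]; simp
lemma EE_eq : mE * mEᵀ = (4 : ℤ) • (halfM (tbl tG8 8 8) + (halfM (tbl tG8 8 8))ᵀ) := by
  ext i j; rw [check_EE]; simp
lemma AE_eq : (mA8 * mE) * (mA8 * mE)ᵀ = (2 : ℤ) • (mE * mEᵀ) := by
  ext i j; rw [check_AE]; simp

lemma sq_even {n : ℕ} (T : Matrix (Fin n) (Fin n) ℤ) (x : Fin n → ℤ) :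
    x ⬝ᵥ ((T + Tᵀ) *ᵥ x) = 2 * (x ⬝ᵥ (T *ᵥ x)) := by
  rw [Matrix.add_mulVec, dotProduct_add, Matrix.mulVec_transpose, two_mul]
  congr 1
  rw [dotProduct_comm, ← Matrix.dotProduct_mulVec]

lemma vecMul_sq {m n : ℕ} (M : Matrix (Fin m) (Fin n) ℤ) (x y : Fin m → ℤ) :
    (x ᵥ* M) ⬝ᵥ (y ᵥ* M) = x ⬝ᵥ ((M * Mᵀ) *ᵥ y) := by
  rw [← Matrix.mulVec_mulVec, ← Matrix.dotProduct_mulVec, Matrix.mulVec_transpose]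

lemma E_dvd (x : Fin 8 → ℤ) : ∃ t, (x ᵥ* mE) ⬝ᵥ (x ᵥ* mE) = 8 * t := by
  refine ⟨x ⬝ᵥ (halfM (tbl tG8 8 8) *ᵥ x), ?_⟩
  rw [vecMul_sq, EE_eq, Matrix.smul_mulVec, dotProduct_smul, sq_even, smul_eq_mul]
  ring

lemma AE_dvd (x : Fin 8 → ℤ) :
    ∃ t, (x ᵥ* (mA8 * mE)) ⬝ᵥ (x ᵥ* (mA8 * mE)) = 16 * t := by
  obtain ⟨t, ht⟩ := E_dvd x
  refine ⟨t, ?_⟩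
  rw [vecMul_sq] at ht ⊢
  rw [AE_eq, Matrix.smul_mulVec, dotProduct_smul, ht, smul_eq_mul]
  ring

/-- The components of a lattice vector (scaled by 4). -/
def blk (c : Fin 32 → ℤ) (k : Fin 4) : Fin 8 → ℤ := fun j => (c ᵥ* mB) (pos k j)

lemma comp_eq (c : Fin 32 → ℤ) (k : Fin 4) : blk c k = (c ᵥ* mF k) ᵥ* mE := by
  rw [Matrix.vecMul_vecMul]
  ext j
  simp only [blk, Matrix.vecMul, dotProduct, check_F]

lemma comp_sub (c : Fin 32 → ℤ) (k : Fin 4) :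
    blk c k - blk c 0 = (c ᵥ* mD k) ᵥ* (mA8 * mE) := by
  rw [comp_eq, comp_eq, ← Matrix.sub_vecMul, ← Matrix.vecMul_sub]
  have h : mF k - mF 0 = mD k * mA8 := by
    ext i j; exact check_D k i j
  rw [h]; simp only [Matrix.vecMul_vecMul, Matrix.mul_assoc]

lemma comp_alt (c : Fin 32 → ℤ) :
    blk c 0 - blk c 1 - blk c 2 + blk c 3 = (2 : ℤ) • ((c ᵥ* mN) ᵥ* mE) := by
  simp only [comp_eq, ← Matrix.sub_vecMul, ← Matrix.vecMul_sub, ← Matrix.add_vecMul,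
    ← Matrix.vecMul_add]
  have h : mF 0 - mF 1 - mF 2 + mF 3 = (2 : ℤ) • mN := by
    ext i j; simpa using check_N i j
  rw [h, Matrix.vecMul_smul, Matrix.smul_vecMul]

lemma self_nonneg {n : ℕ} (v : Fin n → ℤ) : 0 ≤ v ⬝ᵥ v :=
  Finset.sum_nonneg fun i _ => mul_self_nonneg (v i)

lemma comp16 (c : Fin 32 → ℤ) (l k : Fin 4) (h : blk c l ⬝ᵥ blk c l = 0) :
    ∃ t, blk c k ⬝ᵥ blk c k = 16 * t := by
  have h0 : blk c l = 0 := dotProduct_self_eq_zero.1 h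
  have : blk c k = (c ᵥ* mD k - c ᵥ* mD l) ᵥ* (mA8 * mE) := by
    rw [Matrix.sub_vecMul, ← comp_sub, ← comp_sub, h0]; simp
  rw [this]; exact AE_dvd _

lemma alt32 (c : Fin 32 → ℤ) (s : ℤ) (hs : s * s = 1) (v : Fin 8 → ℤ)
    (h : s • v = (2 : ℤ) • ((c ᵥ* mN) ᵥ* mE)) : ∃ t, v ⬝ᵥ v = 32 * t := by
  obtain ⟨t, ht⟩ := E_dvd (c ᵥ* mN)
  refine ⟨t, ?_⟩
  have h2 : (s • v) ⬝ᵥ (s • v) = v ⬝ᵥ v := by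
    simp only [smul_dotProduct, dotProduct_smul, smul_eq_mul, ← mul_assoc, hs, one_mul]
  rw [← h2, h]
  simp only [smul_dotProduct, dotProduct_smul, smul_eq_mul, ht]
  ring

lemma sum32 (f : Fin 32 → ℤ) : ∑ i, f i = ∑ k : Fin 4, ∑ j : Fin 8, f (pos k j) := by
  simp [Fin.sum_univ_succ, pos]
  ring_nf

lemma int_min (c : Fin 32 → ℤ) (h : 0 < (c ᵥ* mB) ⬝ᵥ (c ᵥ* mB)) :
    32 ≤ (c ᵥ* mB) ⬝ᵥ (c ᵥ* mB) := by
  have hsum : (c ᵥ* mB) ⬝ᵥ (c ᵥ* mB) = blk c 0 ⬝ᵥ blk c 0 + blk c 1 ⬝ᵥ blk c 1 +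
      blk c 2 ⬝ᵥ blk c 2 + blk c 3 ⬝ᵥ blk c 3 := by
    rw [dotProduct, sum32, Fin.sum_univ_four]; rfl
  have hz : ∀ k, blk c k ⬝ᵥ blk c k = 0 → blk c k = 0 := fun k => dotProduct_self_eq_zero.1
  have hn : ∀ k, 0 ≤ blk c k ⬝ᵥ blk c k := fun k => self_nonneg _
  have h8 : ∀ k, ∃ t, blk c k ⬝ᵥ blk c k = 8 * t := fun k => by
    rw [comp_eq]; exact E_dvd _
  have h16 := comp16 c
  have ha := comp_alt c
  have e0 : blk c 1 ⬝ᵥ blk c 1 = 0 → blk c 2 ⬝ᵥ blk c 2 = 0 → blk c 3 ⬝ᵥ blk c 3 = 0 →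
      ∃ t, blk c 0 ⬝ᵥ blk c 0 = 32 * t := fun h1 h2 h3 =>
    alt32 c 1 (by norm_num) _ (by rw [← ha, hz _ h1, hz _ h2, hz _ h3]; simp)
  have e1 : blk c 0 ⬝ᵥ blk c 0 = 0 → blk c 2 ⬝ᵥ blk c 2 = 0 → blk c 3 ⬝ᵥ blk c 3 = 0 →
      ∃ t, blk c 1 ⬝ᵥ blk c 1 = 32 * t := fun h1 h2 h3 =>
    alt32 c (-1) (by norm_num) _ (by rw [← ha, hz _ h1, hz _ h2, hz _ h3]; simp)
  have e2 : blk c 0 ⬝ᵥ blk c 0 = 0 → blk c 1 ⬝ᵥ blk c 1 = 0 → blk c 3 ⬝ᵥ blk c 3 = 0 →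
      ∃ t, blk c 2 ⬝ᵥ blk c 2 = 32 * t := fun h1 h2 h3 =>
    alt32 c (-1) (by norm_num) _ (by rw [← ha, hz _ h1, hz _ h2, hz _ h3]; simp)
  have e3 : blk c 0 ⬝ᵥ blk c 0 = 0 → blk c 1 ⬝ᵥ blk c 1 = 0 → blk c 2 ⬝ᵥ blk c 2 = 0 →
      ∃ t, blk c 3 ⬝ᵥ blk c 3 = 32 * t := fun h1 h2 h3 =>
    alt32 c 1 (by norm_num) _ (by rw [← ha, hz _ h1, hz _ h2, hz _ h3]; simp)
  rw [hsum] at h ⊢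
  have a0 := hn 0
  have a1 := hn 1
  have a2 := hn 2
  have a3 := hn 3
  obtain ⟨t0, b0⟩ := h8 0
  obtain ⟨t1, b1⟩ := h8 1
  obtain ⟨t2, b2⟩ := h8 2
  obtain ⟨t3, b3⟩ := h8 3
  clear hsum hz hn h8 ha
  have key : ∀ l, blk c l ⬝ᵥ blk c l = 0 → 32 ≤ blk c 0 ⬝ᵥ blk c 0 + blk c 1 ⬝ᵥ blk c 1 +
      blk c 2 ⬝ᵥ blk c 2 + blk c 3 ⬝ᵥ blk c 3 := by
    intro l hl
    obtain ⟨s0, d0⟩ := h16 l 0 hl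
    obtain ⟨s1, d1⟩ := h16 l 1 hl
    obtain ⟨s2, d2⟩ := h16 l 2 hl
    obtain ⟨s3, d3⟩ := h16 l 3 hl
    generalize blk c 0 ⬝ᵥ blk c 0 = n0 at *
    generalize blk c 1 ⬝ᵥ blk c 1 = n1 at *
    generalize blk c 2 ⬝ᵥ blk c 2 = n2 at *
    generalize blk c 3 ⬝ᵥ blk c 3 = n3 at *
    by_contra hlt
    have : (n1 = 0 ∧ n2 = 0 ∧ n3 = 0) ∨ (n0 = 0 ∧ n2 = 0 ∧ n3 = 0) ∨
        (n0 = 0 ∧ n1 = 0 ∧ n3 = 0) ∨ (n0 = 0 ∧ n1 = 0 ∧ n2 = 0) := by omega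
    rcases this with ⟨p, q, r⟩ | ⟨p, q, r⟩ | ⟨p, q, r⟩ | ⟨p, q, r⟩
    · obtain ⟨t, ht⟩ := e0 p q r; omega
    · obtain ⟨t, ht⟩ := e1 p q r; omega
    · obtain ⟨t, ht⟩ := e2 p q r; omega
    · obtain ⟨t, ht⟩ := e3 p q r; omega
  have k0 := key 0
  have k1 := key 1
  have k2 := key 2
  have k3 := key 3
  clear key e0 e1 e2 e3 h16
  omega

/-- The integer bilinear form. -/
def bG (x y : Fin 32 → ℤ) : ℤ := x ⬝ᵥ (mG *ᵥ y)

lemma bG_eq (x y : Fin 32 → ℤ) : (x ᵥ* mB) ⬝ᵥ (y ᵥ* mB) = 8 * bG x y := by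
  rw [vecMul_sq, BB_eq, Matrix.smul_mulVec, dotProduct_smul, smul_eq_mul, bG]

lemma bG_min (x : Fin 32 → ℤ) (h : 0 < bG x x) : 4 ≤ bG x x := by
  have := int_min x
  rw [bG_eq] at this
  omega

lemma bG_even (x : Fin 32 → ℤ) : ∃ t, bG x x = 2 * t := by
  refine ⟨x ⬝ᵥ (halfM mG *ᵥ x), ?_⟩
  rw [← sq_even, ← G_half, bG]

lemma bG_mul (P : Matrix (Fin 32) (Fin 32) ℤ) (hP : P * mG * Pᵀ = (2 : ℤ) • mG)
    (x y : Fin 32 → ℤ) : bG (x ᵥ* P) (y ᵥ* P) = 2 * bG x y := by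
  rw [bG, ← Matrix.mulVec_transpose P y, ← Matrix.dotProduct_mulVec, Matrix.mulVec_mulVec,
    Matrix.mulVec_mulVec, hP, Matrix.smul_mulVec, dotProduct_smul, smul_eq_mul,
    bG]

lemma det_G : mG.det = 1 := by
  have h1 : mG.det * mH.det = 1 := by rw [← Matrix.det_mul, GH_eq, Matrix.det_one]
  have h2 : mB.det * mB.det = 8 ^ 32 * mG.det := by
    have := congrArg Matrix.det BB_eq
    rwa [Matrix.det_mul, Matrix.det_transpose, Matrix.det_smul, Fintype.card_fin] at this
  have h3 : 0 ≤ mG.det := by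
    have := mul_self_nonneg mB.det
    rw [h2] at this
    exact nonneg_of_mul_nonneg_right this (by norm_num)
  rcases Int.eq_one_or_neg_one_of_mul_eq_one h1 with h | h
  · exact h
  · rw [h] at h3; norm_num at h3

lemma bG_nondeg (x : Fin 32 → ℤ) (h : ∀ y, bG x y = 0) : x = 0 := by
  have h1 : x ᵥ* mG = 0 := by
    apply dotProduct_eq_zero
    intro y
    rw [← Matrix.dotProduct_mulVec]
    exact h y
  have h2 : x ᵥ* (mG * mH) = 0 := by
    rw [← Matrix.vecMul_vecMul, h1, Matrix.zero_vecMul]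
  rwa [GH_eq, Matrix.vecMul_one] at h2

/-- The ambient space. -/
abbrev V32 := EuclideanSpace ℝ (Fin 32)

/-- The parametrization of `Υ`. -/
def phi : (Fin 32 → ℤ) →ₗ[ℤ] V32 where
  toFun c := WithLp.toLp 2 fun k => (((c ᵥ* mB) k : ℤ) : ℝ) / 4
  map_add' x y := by
    ext k; simp [Matrix.add_vecMul, add_div]
  map_smul' r x := by
    ext k
    rw [Matrix.smul_vecMul]
    simp [mul_div_assoc]

lemma inner_phi (x y : Fin 32 → ℤ) : ⟪phi x, phi y⟫ = (bG x y : ℝ) / 2 := by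
  have h : (((x ᵥ* mB) ⬝ᵥ (y ᵥ* mB) : ℤ) : ℝ) = 8 * (bG x y : ℝ) := by
    rw [bG_eq]; push_cast; ring
  have h2 : ⟪phi x, phi y⟫ = (((x ᵥ* mB) ⬝ᵥ (y ᵥ* mB) : ℤ) : ℝ) / 16 := by
    simp only [phi, LinearMap.coe_mk, AddHom.coe_mk, PiLp.inner_apply, dotProduct]
    push_cast
    rw [Finset.sum_div]
    refine Finset.sum_congr rfl fun i _ => ?_
    simp
    ring
  rw [h2, h]; ring

/-- The parametrization of the sublattice given by an integral matrix. -/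
def psi (P : Matrix (Fin 32) (Fin 32) ℤ) : (Fin 32 → ℤ) →ₗ[ℤ] V32 :=
  phi ∘ₗ Matrix.vecMulLinear P

lemma psi_apply (P : Matrix (Fin 32) (Fin 32) ℤ) (x : Fin 32 → ℤ) :
    psi P x = phi (x ᵥ* P) := rfl

theorem gen_inj (s : ℝ) (hs : 0 < s) (f : (Fin 32 → ℤ) →ₗ[ℤ] V32)
    (hf : ∀ x y, ⟪f x, f y⟫ = s * (bG x y : ℝ)) : Function.Injective f := by
  rw [injective_iff_map_eq_zero]
  intro x hx
  apply bG_nondeg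
  intro y
  have := hf x y
  rw [hx, inner_zero_left] at this
  have h2 : (bG x y : ℝ) = 0 := by
    rcases mul_eq_zero.1 this.symm with h | h
    · exact absurd h hs.ne'
    · exact h
  exact_mod_cast h2

lemma bG_single (i j : Fin 32) : bG (Pi.single i 1) (Pi.single j 1) = mG i j := by
  simp [bG]

lemma det_cast (r : ℝ) (hr : r = 1) :
    (Matrix.of fun i j : Fin 32 => r * (mG i j : ℝ)).det = 1 := by
  have h : (Matrix.of fun i j : Fin 32 => r * (mG i j : ℝ)) = (Int.castRingHom ℝ).mapMatrix mG := by
    ext i j; simp [hr]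
  rw [h, ← RingHom.map_det, det_G, map_one]

theorem gen_basis (s : ℝ) (hs : 0 < s) (f : (Fin 32 → ℤ) →ₗ[ℤ] V32)
    (hf : ∀ x y, ⟪f x, f y⟫ = s * (bG x y : ℝ)) :
    ∃ b : Basis (Fin 32) ℤ (LinearMap.range f), ∀ i, (b i : V32) = f (Pi.single i 1) := by
  refine ⟨Basis.ofEquivFun (LinearEquiv.ofInjective f (gen_inj s hs f hf)).symm, fun i => ?_⟩
  rw [Basis.coe_ofEquivFun]
  rfl

theorem gen_lat (s : ℝ) (hs : 0 < s) (f : (Fin 32 → ℤ) →ₗ[ℤ] V32)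
    (hf : ∀ x y, ⟪f x, f y⟫ = s * (bG x y : ℝ)) : IsLat (LinearMap.range f) := by
  constructor
  · rw [LinearMap.range_eq_map]
    exact (Module.Finite.fg_top).map f
  · have hli : LinearIndependent ℝ (fun i : Fin 32 => f (Pi.single i 1)) := by
      apply Matrix.linearIndependent_of_det_gram_ne_zero (𝕜 := ℝ)
      have : Matrix.gram ℝ (fun i : Fin 32 => f (Pi.single i 1)) =
          s • (Matrix.of fun i j : Fin 32 => (1 : ℝ) * (mG i j : ℝ)) := by
        ext i j
        simp [Matrix.gram, hf, bG_single]
      rw [this, Matrix.det_smul, det_cast 1 rfl]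
      positivity
    have htop := hli.span_eq_top_of_card_eq_finrank (by simp)
    rw [eq_top_iff, ← htop]
    apply Submodule.span_mono
    rintro _ ⟨i, rfl⟩
    exact ⟨_, rfl⟩

theorem gen_min (s : ℝ) (hs : 0 < s) (f : (Fin 32 → ℤ) →ₗ[ℤ] V32)
    (hf : ∀ x y, ⟪f x, f y⟫ = s * (bG x y : ℝ)) : minNorm (LinearMap.range f) = s * 4 := by
  apply IsLeast.csInf_eq
  constructor
  · have h4 : bG (Pi.single 0 1) (Pi.single 0 1) = 4 := by
      rw [bG_single]; decide +kernel
    refine ⟨f (Pi.single 0 1), ⟨_, rfl⟩, ?_, ?_⟩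
    · intro h0
      have := hf (Pi.single 0 1) (Pi.single 0 1)
      rw [h0, inner_zero_left, h4] at this
      push_cast at this
      linarith
    · rw [hf, h4]; norm_num
  · rintro r ⟨_, ⟨x, rfl⟩, hx0, rfl⟩
    rw [hf]
    have hpos : 0 < ⟪f x, f x⟫ := real_inner_self_pos.2 hx0
    rw [hf] at hpos
    have h1 : (0 : ℝ) < (bG x x : ℝ) := pos_of_mul_pos_right hpos hs.le
    have h2 : 4 ≤ bG x x := bG_min x (by exact_mod_cast h1)
    have h3 : (4 : ℝ) ≤ (bG x x : ℝ) := by exact_mod_cast h2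
    exact mul_le_mul_of_nonneg_left h3 hs.le

lemma gen_even (f : (Fin 32 → ℤ) →ₗ[ℤ] V32)
    (hf : ∀ x y, ⟪f x, f y⟫ = 1 * (bG x y : ℝ)) : IsEvenLat (LinearMap.range f) := by
  constructor
  · rintro _ ⟨x, rfl⟩ _ ⟨y, rfl⟩
    exact ⟨bG x y, by rw [hf, one_mul]⟩
  · rintro _ ⟨x, rfl⟩
    obtain ⟨t, ht⟩ := bG_even x
    exact ⟨t, by rw [hf, one_mul, ht]; push_cast; rfl⟩

lemma gen_unimod (f : (Fin 32 → ℤ) →ₗ[ℤ] V32)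
    (hf : ∀ x y, ⟪f x, f y⟫ = 1 * (bG x y : ℝ)) : IsUnimodularLat (LinearMap.range f) := by
  obtain ⟨b, hb⟩ := gen_basis 1 one_pos f hf
  refine ⟨32, b, ?_⟩
  simp only [hb, hf, bG_single]
  exact det_cast 1 rfl

lemma inner_psi (P : Matrix (Fin 32) (Fin 32) ℤ) (hP : P * mG * Pᵀ = (2 : ℤ) • mG)
    (x y : Fin 32 → ℤ) : ⟪psi P x, psi P y⟫ = 1 * (bG x y : ℝ) := by
  rw [psi_apply, psi_apply, inner_phi, bG_mul P hP]; push_cast; ring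

lemma inner_phi' (x y : Fin 32 → ℤ) : ⟪phi x, phi y⟫ = (1 / 2 : ℝ) * (bG x y : ℝ) := by
  rw [inner_phi]; ring

lemma phi_inj : Function.Injective phi := gen_inj (1 / 2) (by norm_num) phi inner_phi'

lemma A_add_A' : mA + mA' = 1 := by simp [mA']

lemma psi_le (P : Matrix (Fin 32) (Fin 32) ℤ) : LinearMap.range (psi P) ≤ LinearMap.range phi := by
  rintro _ ⟨x, rfl⟩
  exact ⟨_, rfl⟩

/-- there exist a rank 32 lattice `Υ` with `√2·Υ` even unimodular of minimum
norm 4, and a polarization `M, N` of `Υ` by rank 32 even unimodular lattices with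
`μ(M) = 4` and `μ(N) ∈ {2, 4}`. -/
theorem statement18 :
    ∃ Υ M N : Submodule ℤ (EuclideanSpace ℝ (Fin 32)),
      IsLat Υ ∧ SqrtTwoEvenUnimod Υ ∧ 2 * minNorm Υ = 4 ∧
      IsPolarization Υ M N ∧
      IsLat M ∧ IsEvenLat M ∧ IsUnimodularLat M ∧
      IsLat N ∧ IsEvenLat N ∧ IsUnimodularLat N ∧
      minNorm M = 4 ∧ (minNorm N = 2 ∨ minNorm N = 4) := by
  have hM := inner_psi mA AGA_eq
  have hN := inner_psi mA' A'GA'_eq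
  refine ⟨LinearMap.range phi, LinearMap.range (psi mA), LinearMap.range (psi mA'),
    gen_lat (1 / 2) (by norm_num) phi inner_phi', ⟨?_, ?_, ?_⟩, ?_,
    ⟨psi_le _, psi_le _, (gen_even _ hM).1, (gen_even _ hN).1, ?_, ?_⟩,
    gen_lat 1 one_pos _ hM, gen_even _ hM, gen_unimod _ hM,
    gen_lat 1 one_pos _ hN, gen_even _ hN, gen_unimod _ hN, ?_, Or.inr ?_⟩
  · rintro _ ⟨x, rfl⟩
    obtain ⟨t, ht⟩ := bG_even x
    exact ⟨t, by rw [inner_phi, ht]; push_cast; ring⟩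
  · rintro _ ⟨x, rfl⟩ _ ⟨y, rfl⟩
    exact ⟨bG x y, by rw [inner_phi]; ring⟩
  · obtain ⟨b, hb⟩ := gen_basis (1 / 2) (by norm_num) phi inner_phi'
    refine ⟨32, b, ?_⟩
    simp only [hb, inner_phi', bG_single, ← mul_assoc]
    exact det_cast _ (by norm_num)
  · rw [gen_min (1 / 2) (by norm_num) phi inner_phi']; norm_num
  · apply le_antisymm (sup_le (psi_le _) (psi_le _))
    rintro _ ⟨x, rfl⟩
    have hx : phi x = psi mA x + psi mA' x := by
      rw [psi_apply, psi_apply, ← map_add, ← Matrix.vecMul_add, A_add_A', Matrix.vecMul_one]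
    rw [hx]
    exact Submodule.add_mem_sup ⟨x, rfl⟩ ⟨x, rfl⟩
  · ext v
    rw [Submodule.mem_inf, Submodule.mem_smul_pointwise_iff_exists]
    constructor
    · rintro ⟨⟨x, rfl⟩, ⟨y, hy⟩⟩
      have h : y ᵥ* mA' = x ᵥ* mA := phi_inj hy
      refine ⟨phi (x + y), ⟨_, rfl⟩, ?_⟩
      rw [← map_smul, psi_apply]
      congr 1
      calc (2 : ℤ) • (x + y) = (y ᵥ* mA') ᵥ* mA + (x ᵥ* mA) ᵥ* mA' := by
            rw [Matrix.vecMul_vecMul, Matrix.vecMul_vecMul, A'A_eq, AA'_eq, Matrix.vecMul_smul,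
              Matrix.vecMul_smul, Matrix.vecMul_one, Matrix.vecMul_one, smul_add, add_comm]
        _ = x ᵥ* mA := by
            rw [h, ← Matrix.vecMul_add, A_add_A', Matrix.vecMul_one]
    · rintro ⟨_, ⟨x, rfl⟩, rfl⟩
      constructor
      · refine ⟨x ᵥ* mA', ?_⟩
        rw [psi_apply, Matrix.vecMul_vecMul, A'A_eq, Matrix.vecMul_smul, Matrix.vecMul_one, map_smul]
      · refine ⟨x ᵥ* mA, ?_⟩
        rw [psi_apply, Matrix.vecMul_vecMul, AA'_eq, Matrix.vecMul_smul, Matrix.vecMul_one, map_smul]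
  · rw [gen_min 1 one_pos _ hM]; norm_num
  · rw [gen_min 1 one_pos _ hN]; norm_num
end
end

section
/- For each n ∈ {96, 120, 128}, there exists a positive definite even unimodular lattice of rank n whose minimum norm is exactly 8. (For ranks 96 and 120 the extremal bounds are 10 and 12 respectively; for rank 128 the extremal bound is 12.) -/
noncomputable section

open scoped RealInnerProductSpace Pointwise
open Module

variable {V : Type*} [NormedAddCommGroup V] [InnerProductSpace ℝ V]

/-- An even unimodular integral lattice of rank `r` and minimum `m`, together with an
action of `ℤ[(1+√-7)/2]`, given by `h` and its adjoint `g = 1 - h`, `h g = 2`. -/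
structure LatData (Λ : Type) [AddCommGroup Λ] (r : ℕ) (m : ℤ) where
  B : Λ →ₗ[ℤ] Λ →ₗ[ℤ] ℤ
  h : Λ →ₗ[ℤ] Λ
  g : Λ →ₗ[ℤ] Λ
  symm : ∀ x y, B x y = B y x
  even : ∀ x, Even (B x x)
  adj : ∀ x y, B (h x) y = B x (g y)
  add_hg : ∀ x, h x + g x = x
  hg : ∀ x, h (g x) = (2 : ℤ) • x
  gh : ∀ x, g (h x) = (2 : ℤ) • x
  dual : ∀ f : Λ →ₗ[ℤ] ℤ, ∃ x, ∀ y, f y = B x y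
  mpos : 0 < m
  min : ∀ x, x ≠ 0 → m ≤ B x x
  ex : ∃ x, B x x = m
  free : Module.Free ℤ Λ
  fin : Module.Finite ℤ Λ
  rank : Module.finrank ℤ Λ = r
  emb : ∃ φ : Λ →ₗ[ℤ] (Fin r → ℝ), ∀ x y, (B x y : ℝ) = ∑ i, φ x i * φ y i

/-- Existence of such a lattice. -/
def Good (r : ℕ) (m : ℤ) : Prop :=
  ∃ (Λ : Type) (_ : AddCommGroup Λ), Nonempty (LatData Λ r m)

namespace LatData

variable {Λ : Type} [AddCommGroup Λ] {r : ℕ} {m : ℤ} (D : LatData Λ r m)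

theorem adj' (x y : Λ) : D.B (D.g x) y = D.B x (D.h y) := by
  rw [D.symm, ← D.adj, D.symm]

theorem Bhh (x y : Λ) : D.B (D.h x) (D.h y) = 2 * D.B x y := by
  rw [D.adj, D.gh]; simp

theorem Bgg (x y : Λ) : D.B (D.g x) (D.g y) = 2 * D.B x y := by
  rw [D.adj', D.hg]; simp

theorem eq_zero_of_self {x : Λ} (hx : D.B x x = 0) : x = 0 := by
  by_contra h
  have := D.min x h
  have := D.mpos
  omega

theorem nonneg (x : Λ) : 0 ≤ D.B x x := by
  by_cases h : x = 0
  · simp [h]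
  · exact (D.mpos.trans_le (D.min x h)).le

theorem two_cancel (D : LatData Λ r m) {x y : Λ} (hxy : (2 : ℤ) • x = (2 : ℤ) • y) : x = y := by
  have h1 : (2 : ℤ) • (x - y) = 0 := by rw [smul_sub, hxy, sub_self]
  have h2 : D.B ((2 : ℤ) • (x - y)) (x - y) = 0 := by rw [h1]; simp
  simp only [map_smul, LinearMap.smul_apply, smul_eq_mul] at h2
  exact sub_eq_zero.mp (D.eq_zero_of_self (by omega))

theorem h_cancel {x y : Λ} (hxy : D.h x = D.h y) : x = y :=
  D.two_cancel (by rw [← D.gh, ← D.gh, hxy])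

theorem g_cancel {x y : Λ} (hxy : D.g x = D.g y) : x = y :=
  D.two_cancel (by rw [← D.hg, ← D.hg, hxy])

/-- if `B a` is even then `a ∈ 2Λ`. -/
theorem div_two {a : Λ} (ha : ∀ z, Even (D.B a z)) : ∃ e, a = (2 : ℤ) • e := by
  obtain ⟨e, he⟩ := D.dual
    { toFun := fun z => D.B a z / 2
      map_add' := fun x y => by
        have hx := ha x; have hy := ha y
        rw [map_add]
        grind
      map_smul' := fun c x => by
        obtain ⟨t, ht⟩ := ha x
        have h2 : D.B a x = 2 * t := by omega
        simp only [map_smul, smul_eq_mul, RingHom.id_apply, h2]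
        rw [show c * (2 * t) = 2 * (c * t) by ring]
        simp }
  refine ⟨e, ?_⟩
  have key : ∀ z, D.B (a - (2 : ℤ) • e) z = 0 := by
    intro z
    have h1 := he z
    have h2 := ha z
    simp only [LinearMap.coe_mk, AddHom.coe_mk] at h1
    simp only [map_sub, map_smul, LinearMap.sub_apply, LinearMap.smul_apply, smul_eq_mul, ← h1]
    grind
  exact sub_eq_zero.mp (D.eq_zero_of_self (key _))

/-- The Turyn type lattice. -/
def T (k : ℕ) : Submodule ℤ (Fin k → Λ) where
  carrier := {v | ∃ (n : Λ) (x : Fin k → Λ) (y : Λ), (∀ i, v i = D.g n + D.h (x i)) ∧ ∑ i, x i = D.g y}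
  add_mem' := by
    rintro a b ⟨n, x, y, h1, h2⟩ ⟨n', x', y', h1', h2'⟩
    refine ⟨n + n', x + x', y + y', fun i => ?_, ?_⟩
    · simp only [Pi.add_apply, h1, h1', map_add]; abel
    · simp only [Pi.add_apply, Finset.sum_add_distrib, h2, h2', map_add]
  zero_mem' := ⟨0, 0, 0, by simp, by simp⟩
  smul_mem' := by
    rintro c a ⟨n, x, y, h1, h2⟩
    refine ⟨c • n, c • x, c • y, fun i => ?_, ?_⟩
    · simp only [Pi.smul_apply, h1, smul_add, map_smul]
    · simp only [Pi.smul_apply, ← Finset.smul_sum, h2, map_smul]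

theorem mem_T {k : ℕ} {v : Fin k → Λ} : v ∈ D.T k ↔
    ∃ (n : Λ) (x : Fin k → Λ) (y : Λ), (∀ i, v i = D.g n + D.h (x i)) ∧ ∑ i, x i = D.g y := Iff.rfl

/-- membership criterion. -/
theorem mem_T_of {k : ℕ} (v : Fin k → Λ) (n : Λ) (u : Fin k → Λ) (e : Λ)
    (h1 : ∀ i, v i - n = D.h (u i)) (h2 : ∑ i, v i = D.g e) : v ∈ D.T k := by
  have hv : ∀ i, v i = D.g n + D.h (n + u i) := by
    intro i
    have := D.add_hg n
    rw [map_add, ← h1 i]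
    calc v i = n + (v i - n) := by abel
      _ = (D.h n + D.g n) + (v i - n) := by rw [this]
      _ = _ := by abel
  have h3 : D.h (∑ i, (n + u i)) = D.g (e - (k : ℤ) • n) := by
    rw [map_sum, map_sub, ← h2, map_smul, Finset.sum_congr rfl (fun i _ => hv i),
      Finset.sum_add_distrib]
    simp
  refine ⟨n, fun i => n + u i, (e - (k : ℤ) • n) + ∑ i, (n + u i), hv, ?_⟩
  rw [map_add, ← h3, D.add_hg]

theorem form_eq {k : ℕ} {v v' : Fin k → Λ} {n n' : Λ} {x x' : Fin k → Λ} {y y' : Λ}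
    (h1 : ∀ i, v i = D.g n + D.h (x i)) (h2 : ∑ i, x i = D.g y)
    (h1' : ∀ i, v' i = D.g n' + D.h (x' i)) (h2' : ∑ i, x' i = D.g y') :
    ∑ i, D.B (v i) (v' i) =
      2 * (k * D.B n n' + ∑ i, D.B (x i) (x' i) + D.B (D.g n) y' + D.B (D.g n') y) := by
  have h3 : ∀ i, D.B (v i) (v' i) = 2 * D.B n n' + 2 * D.B (x i) (x' i)
      + D.B (D.g (D.g n)) (x' i) + D.B (D.g (D.g n')) (x i) := by
    intro i
    rw [h1, h1', map_add, map_add, LinearMap.add_apply, LinearMap.add_apply, D.Bhh, D.Bgg,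
      ← D.adj' (D.g n) (x' i), D.symm (D.h (x i)), ← D.adj' (D.g n')]
    ring
  rw [Finset.sum_congr rfl (fun i _ => h3 i)]
  simp only [Finset.sum_add_distrib, ← map_sum, h2, h2', D.Bgg, ← Finset.mul_sum]
  simp
  ring

theorem form_even {k : ℕ} {v v' : Fin k → Λ} (hv : v ∈ D.T k) (hv' : v' ∈ D.T k) :
    Even (∑ i, D.B (v i) (v' i)) := by
  obtain ⟨n, x, y, h1, h2⟩ := hv
  obtain ⟨n', x', y', h1', h2'⟩ := hv'
  rw [D.form_eq h1 h2 h1' h2']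
  simp

/-- The form on the Turyn lattice. -/
def TB (k : ℕ) : D.T k →ₗ[ℤ] D.T k →ₗ[ℤ] ℤ :=
  LinearMap.mk₂ ℤ (fun v w => (∑ i, D.B (v.1 i) (w.1 i)) / 2)
    (fun a b c => by
      have h1 := D.form_even a.2 c.2
      have h2 := D.form_even b.2 c.2
      simp only [Submodule.coe_add, Pi.add_apply, map_add, LinearMap.add_apply,
        Finset.sum_add_distrib]
      grind)
    (fun t a c => by
      obtain ⟨s, h1⟩ := D.form_even a.2 c.2
      simp only [Submodule.coe_smul, Pi.smul_apply, map_smul, LinearMap.smul_apply,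
        smul_eq_mul]
      rw [← Finset.mul_sum, h1]
      rw [show t * (s + s) = 2 * (t * s) by ring, show s + s = 2 * s by ring]
      simp)
    (fun c a b => by
      have h1 := D.form_even c.2 a.2
      have h2 := D.form_even c.2 b.2
      simp only [Submodule.coe_add, Pi.add_apply, map_add, 
        Finset.sum_add_distrib]
      grind)
    (fun t c a => by
      obtain ⟨s, h1⟩ := D.form_even c.2 a.2
      simp only [Submodule.coe_smul, Pi.smul_apply, map_smul, 
        smul_eq_mul]
      rw [← Finset.mul_sum, h1]
      rw [show t * (s + s) = 2 * (t * s) by ring, show s + s = 2 * s by ring]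
      simp)

theorem TB_eq {k : ℕ} (v w : D.T k) : 2 * D.TB k v w = ∑ i, D.B (v.1 i) (w.1 i) := by
  have h := D.form_even v.2 w.2
  have : D.TB k v w = (∑ i, D.B (v.1 i) (w.1 i)) / 2 := rfl
  rw [this]
  grind

theorem TB_even {k : ℕ} (v : D.T k) : Even (D.TB k v v) := by
  have h := D.TB_eq v v
  obtain ⟨v, n, x, y, h1, h2⟩ := v
  rw [D.form_eq h1 h2 h1 h2] at h
  have he : Even (∑ i, D.B (x i) (x i)) := Finset.even_sum _ fun i _ => D.even _
  have hn : Even ((k : ℤ) * D.B n n) := (D.even n).mul_left _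
  grind

theorem single_two_mem {k : ℕ} (i : Fin k) (z : Λ) : Pi.single i ((2 : ℤ) • z) ∈ D.T k := by
  refine ⟨0, Pi.single i (D.g z), z, fun j => ?_, by simp⟩
  by_cases hj : j = i
  · subst hj; simp [D.hg]
  · simp [hj]

theorem two_mem {k : ℕ} (v : Fin k → Λ) : (2 : ℤ) • v ∈ D.T k := by
  have : (2 : ℤ) • v = ∑ i, Pi.single i ((2 : ℤ) • v i) := by
    rw [Finset.univ_sum_single]; rfl
  rw [this]
  exact Submodule.sum_mem _ fun i _ => D.single_two_mem i _

theorem h_mem {k : ℕ} (v : Fin k → Λ) (hv : v ∈ D.T k) : (fun i => D.h (v i)) ∈ D.T k := by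
  obtain ⟨n, x, y, h1, h2⟩ := hv
  have comm : ∀ z, D.h (D.g z) = D.g (D.h z) := fun z => by rw [D.hg, D.gh]
  refine ⟨D.h n, fun i => D.h (x i), D.h y, fun i => ?_, ?_⟩
  · simp only [h1, map_add, comm]
  · rw [← map_sum, h2, comm]

theorem g_mem {k : ℕ} (v : Fin k → Λ) (hv : v ∈ D.T k) : (fun i => D.g (v i)) ∈ D.T k := by
  have : (fun i => D.g (v i)) = v - fun i => D.h (v i) := by
    funext i
    simp only [Pi.sub_apply]
    nth_rewrite 2 [← D.add_hg (v i)]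
    abel
  rw [this]
  exact Submodule.sub_mem _ hv (D.h_mem v hv)

/-- coordinatewise `h`. -/
def Th (k : ℕ) : D.T k →ₗ[ℤ] D.T k where
  toFun v := ⟨fun i => D.h (v.1 i), D.h_mem v.1 v.2⟩
  map_add' a b := by ext i; simp
  map_smul' c a := by ext i; simp

/-- coordinatewise `g`. -/
def Tg (k : ℕ) : D.T k →ₗ[ℤ] D.T k where
  toFun v := ⟨fun i => D.g (v.1 i), D.g_mem v.1 v.2⟩
  map_add' a b := by ext i; simp
  map_smul' c a := by ext i; simp

theorem T_dual {k : ℕ} (hk : 0 < k) (f : D.T k →ₗ[ℤ] ℤ) : ∃ w, ∀ v, f v = D.TB k w v := by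
  have hw : ∀ i : Fin k, ∃ w, ∀ z, f ⟨_, D.single_two_mem i z⟩ = D.B w z := by
    intro i
    obtain ⟨w, hw⟩ := D.dual
      { toFun := fun z => f ⟨_, D.single_two_mem i z⟩
        map_add' := fun a b => by
          rw [← map_add]; congr 1; ext j
          simp [Pi.single_add]
        map_smul' := fun c a => by
          rw [← map_smul]; congr 1; ext j
          simp only [RingHom.id_apply, Submodule.coe_smul, Pi.smul_apply]
          rw [smul_comm, Pi.single_smul, Pi.smul_apply] }
    exact ⟨w, hw⟩
  choose w hw using hw
  have key : ∀ v : D.T k, 2 * f v = ∑ i, D.B (w i) (v.1 i) := by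
    intro v
    rw [← Finset.sum_congr rfl (fun i _ => hw i (v.1 i)), ← map_sum, ← smul_eq_mul, ← map_smul]
    congr 1
    ext j
    simp only [AddSubmonoidClass.coe_finsetSum, Submodule.coe_smul]
    rw [Finset.univ_sum_single (fun i => (2 : ℤ) • v.1 i)]
    rfl
  have hmem : w ∈ D.T k := by
    let i0 : Fin k := ⟨0, hk⟩
    have h1 : ∀ i, ∃ u, w i - w i0 = D.h u := by
      intro i
      by_cases hi : i = i0
      · exact ⟨0, by simp [hi]⟩
      obtain ⟨e, he⟩ := D.div_two (a := D.g (w i - w i0)) (fun z => by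
        have hm : Pi.single i (D.h z) - Pi.single i0 (D.h z) ∈ D.T k := by
          refine ⟨0, Pi.single i z - Pi.single i0 z, 0, fun j => ?_, by simp⟩
          simp only [map_zero, zero_add, Pi.sub_apply, map_sub]
          rw [Pi.apply_single (fun _ => D.h) (fun _ => map_zero _),
            Pi.apply_single (fun _ => D.h) (fun _ => map_zero _)]
        have h := key ⟨_, hm⟩
        have h3 : ∀ (j : Fin k), ∑ l, D.B (w l) ((Pi.single j (D.h z) : Fin k → Λ) l)
            = D.B (w j) (D.h z) := by
          intro j
          rw [Finset.sum_eq_single j]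
          · simp
          · intro b _ hb; simp [hb]
          · simp
        simp only [Pi.sub_apply, map_sub, Finset.sum_sub_distrib, h3] at h
        rw [D.adj', map_sub, LinearMap.sub_apply, ← h]
        simp)
      exact ⟨e, D.g_cancel (by rw [he, D.gh])⟩
    choose u hu using h1
    obtain ⟨e, he⟩ := D.div_two (a := D.h (∑ i, w i)) (fun z => by
      have hm : (fun _ => D.g z) ∈ D.T k := ⟨z, 0, 0, by simp, by simp⟩
      have h := key ⟨_, hm⟩
      rw [D.adj, map_sum, LinearMap.sum_apply]
      exact ⟨_, by rw [← h]; ring⟩)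
    exact D.mem_T_of w (w i0) u e hu (D.h_cancel (by rw [he, D.hg]))
  refine ⟨⟨w, hmem⟩, fun v => ?_⟩
  have h1 := key v
  have h2 := D.TB_eq ⟨w, hmem⟩ v
  simp only at h2
  omega

theorem T_min {k : ℕ} (hkm : ∀ t : ℤ, Even t → k * m ≤ 2 * t → 2 * m ≤ t) (v : D.T k)
    (hv : v ≠ 0) : 2 * m ≤ D.TB k v v := by
  have he := D.TB_even v
  have hB := D.TB_eq v v
  by_cases h0 : ∀ i, v.1 i ≠ 0
  · apply hkm _ he
    rw [hB]
    have := Finset.card_nsmul_le_sum Finset.univ (fun i => D.B (v.1 i) (v.1 i)) m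
      (fun i _ => D.min _ (h0 i))
    simpa using this
  · push Not at h0
    obtain ⟨i, hi⟩ := h0
    obtain ⟨v, n, x, y, h1, h2⟩ := v
    simp only at hi hB
    have h3 : D.g n = - D.h (x i) := by
      have := h1 i
      rw [hi] at this
      exact eq_neg_of_add_eq_zero_left this.symm
    have h4 : ∀ j, v j = D.h (x j - x i) := by
      intro j; rw [h1, h3, map_sub]; abel
    have h5 : x i = D.g (x i - n) := by
      rw [map_sub, h3]
      nth_rewrite 1 [← D.add_hg (x i)]
      abel
    have h6 : ∑ j, (x j - x i) = D.g (y - (k : ℤ) • (x i - n)) := by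
      rw [Finset.sum_sub_distrib, h2, map_sub, map_smul, ← h5]; simp
    have h7 : D.TB k ⟨v, n, x, y, h1, h2⟩ ⟨v, n, x, y, h1, h2⟩
        = ∑ j, D.B (x j - x i) (x j - x i) := by
      simp only [h4, D.Bhh, ← Finset.mul_sum] at hB
      omega
    rw [h7]
    have hne : ∃ j, x j - x i ≠ 0 := by
      by_contra! hall
      apply hv
      ext j
      simp [h4, hall]
    obtain ⟨j, hj⟩ := hne
    by_cases h8 : ∃ l, l ≠ j ∧ x l - x i ≠ 0
    · obtain ⟨l, hlj, hl⟩ := h8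
      have h9 : ∑ s ∈ {l, j}, D.B (x s - x i) (x s - x i) ≤ ∑ s, D.B (x s - x i) (x s - x i) :=
        Finset.sum_le_sum_of_subset_of_nonneg (Finset.subset_univ _) fun s _ _ => D.nonneg _
      rw [Finset.sum_pair hlj] at h9
      have := D.min _ hl
      have := D.min _ hj
      omega
    · push Not at h8
      rw [Finset.sum_eq_single j (fun b _ hb => h8 b hb) (by simp)] at h6
      rw [Finset.sum_eq_single j (fun b _ hb => by simp [h8 b hb]) (by simp), h6, D.Bgg]
      have : y - (k : ℤ) • (x i - n) ≠ 0 := by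
        intro h; rw [h, map_zero] at h6; exact hj h6
      have := D.min _ this
      omega

/-- The Turyn construction. -/
def turyn (k : ℕ) (hk : 0 < k) (hkm : ∀ t : ℤ, Even t → k * m ≤ 2 * t → 2 * m ≤ t) :
    LatData (D.T k) (k * r) (2 * m) where
  B := D.TB k
  h := D.Th k
  g := D.Tg k
  symm v w := by
    have h1 := D.TB_eq v w
    have h2 := D.TB_eq w v
    rw [Finset.sum_congr rfl (fun i _ => D.symm _ _)] at h1
    omega
  even := D.TB_even
  adj v w := by
    have h1 := D.TB_eq (D.Th k v) w
    have h2 := D.TB_eq v (D.Tg k w)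
    simp only [Th, Tg, LinearMap.coe_mk, AddHom.coe_mk, D.adj] at h1 h2 ⊢
    omega
  add_hg v := by ext i; exact D.add_hg _
  hg v := by ext i; exact D.hg _
  gh v := by ext i; exact D.gh _
  dual := D.T_dual hk
  mpos := by have := D.mpos; omega
  min := D.T_min hkm
  ex := by
    obtain ⟨x, hx⟩ := D.ex
    let i0 : Fin k := ⟨0, hk⟩
    refine ⟨⟨_, D.single_two_mem i0 x⟩, ?_⟩
    have h := D.TB_eq ⟨_, D.single_two_mem i0 x⟩ ⟨_, D.single_two_mem i0 x⟩
    simp only at h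
    rw [Finset.sum_eq_single i0 (fun b _ hb => by simp [hb]) (by simp)] at h
    simp only [Pi.single_eq_same, map_smul, LinearMap.smul_apply, hx, smul_eq_mul] at h
    omega
  free := by
    have := D.free; have := D.fin
    infer_instance
  fin := by
    have := D.free; have := D.fin
    infer_instance
  rank := by
    have := D.free; have := D.fin
    have hr : Module.finrank ℤ (Fin k → Λ) = k * r := by
      rw [Module.finrank_pi_fintype]; simp [D.rank]
    apply le_antisymm
    · rw [← hr]
      exact LinearMap.finrank_le_finrank_of_injective (D.T k).injective_subtype
    · rw [← hr]
      let F : (Fin k → Λ) →ₗ[ℤ] D.T k :=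
        LinearMap.codRestrict (D.T k) (LinearMap.lsmul ℤ (Fin k → Λ) 2) D.two_mem
      apply LinearMap.finrank_le_finrank_of_injective (f := F)
      intro a b hab
      have h1 : (2 : ℤ) • a = (2 : ℤ) • b := congrArg Subtype.val hab
      funext i
      exact D.two_cancel (congrFun h1 i)
  emb := by
    obtain ⟨φ, hφ⟩ := D.emb
    refine ⟨{ toFun := fun v j => (√2)⁻¹ * φ (v.1 (finProdFinEquiv.symm j).1)
                (finProdFinEquiv.symm j).2
              map_add' := fun a b => by
                funext j; simp [mul_add]
              map_smul' := fun c a => by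
                funext j; simp; ring }, fun v w => ?_⟩
    have h := D.TB_eq v w
    have h' : (2 : ℝ) * (D.TB k v w : ℝ) = ∑ i, ((D.B (v.1 i) (w.1 i) : ℤ) : ℝ) := by
      exact_mod_cast h
    simp only [hφ] at h'
    rw [← Fintype.sum_prod_type'] at h'
    rw [← finProdFinEquiv.sum_comp]
    simp only [LinearMap.coe_mk, AddHom.coe_mk, Equiv.symm_apply_apply]
    have h2 : (√2)⁻¹ * (√2)⁻¹ = (2 : ℝ)⁻¹ := by
      rw [← mul_inv, Real.mul_self_sqrt (by norm_num)]
    have h3 : ∀ a b : ℝ, (√2)⁻¹ * a * ((√2)⁻¹ * b) = (2 : ℝ)⁻¹ * (a * b) := by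
      intro a b; rw [← h2]; ring
    simp only [h3, ← Finset.mul_sum]
    rw [← h']
    ring

end LatData

theorem Good.turyn {r : ℕ} {m : ℤ} (H : Good r m) (k : ℕ) (hk : 0 < k)
    (hkm : ∀ t : ℤ, Even t → k * m ≤ 2 * t → 2 * m ≤ t) : Good (k * r) (2 * m) := by
  obtain ⟨Λ, i1, ⟨D⟩⟩ := H
  exact ⟨D.T k, inferInstance, ⟨D.turyn k hk hkm⟩⟩

/-- Construction A matrix of the Hamming code; its columns are `√2` times a basis of `E₈`. -/
def e8C : Matrix (Fin 8) (Fin 8) ℤ :=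
  !![1, 0, 0, 0, 0, 0, 0, 0; 0, 1, 0, 0, 0, 0, 0, 0; 0, 0, 1, 0, 0, 0, 0, 0;
     0, 0, 0, 1, 0, 0, 0, 0; 1, 1, 1, 0, 2, 0, 0, 0; 1, 0, 1, 1, 0, 2, 0, 0;
     0, 1, 1, 1, 0, 0, 2, 0; 1, 1, 0, 1, 0, 0, 0, 2]

/-- Gram matrix of `E₈`. -/
def e8G : Matrix (Fin 8) (Fin 8) ℤ :=
  !![2, 1, 1, 1, 1, 1, 0, 1; 1, 2, 1, 1, 1, 0, 1, 1; 1, 1, 2, 1, 1, 1, 1, 0;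
     1, 1, 1, 2, 0, 1, 1, 1; 1, 1, 1, 0, 2, 0, 0, 0; 1, 0, 1, 1, 0, 2, 0, 0;
     0, 1, 1, 1, 0, 0, 2, 0; 1, 1, 0, 1, 0, 0, 0, 2]

/-- Inverse Gram matrix of `E₈`. -/
def e8I : Matrix (Fin 8) (Fin 8) ℤ :=
  !![2, 0, 0, 0, -1, -1, 0, -1; 0, 2, 0, 0, -1, 0, -1, -1; 0, 0, 2, 0, -1, -1, -1, 0;
     0, 0, 0, 2, 0, -1, -1, -1; -1, -1, -1, 0, 2, 1, 1, 1; -1, 0, -1, -1, 1, 2, 1, 1;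
     0, -1, -1, -1, 1, 1, 2, 1; -1, -1, 0, -1, 1, 1, 1, 2]

/-- The action of `(1+√-7)/2` on `E₈`. -/
def e8H : Matrix (Fin 8) (Fin 8) ℤ :=
  !![2, 2, 2, 2, 1, 1, 1, 1; -1, -1, 0, 0, -1, 1, -1, -1; -1, 0, 1, 0, 1, -1, 1, -1;
     1, 0, 0, 1, 1, 1, -1, 1; 0, 0, -1, -1, 0, 0, 0, 0; -1, -1, -1, -1, -2, 0, 0, 0;
     0, 1, -1, 0, -1, -1, 1, 1; -1, 0, -1, -2, 0, -2, 0, 0]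

open Matrix in
theorem e8_CC (x y : Fin 8 → ℤ) : 2 * (x ⬝ᵥ e8G *ᵥ y) = (e8C *ᵥ x) ⬝ᵥ (e8C *ᵥ y) := by
  have : e8Cᵀ * e8C = 2 * e8G := by decide +kernel
  rw [Matrix.dotProduct_mulVec (e8C *ᵥ x), Matrix.vecMul_mulVec, this,
    ← Matrix.dotProduct_mulVec]
  rw [two_mul, two_mul, Matrix.add_mulVec, dotProduct_add]

open Matrix in
theorem e8_even (x : Fin 8 → ℤ) : Even (x ⬝ᵥ e8G *ᵥ x) := by
  refine ⟨x 0^2 + x 1^2 + x 2^2 + x 3^2 + x 4^2 + x 5^2 + x 6^2 + x 7^2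
    + x 0 * (x 1 + x 2 + x 3 + x 4 + x 5 + x 7) + x 1 * (x 2 + x 3 + x 4 + x 6 + x 7)
    + x 2 * (x 3 + x 4 + x 5 + x 6) + x 3 * (x 5 + x 6 + x 7), ?_⟩
  simp [e8G, Matrix.mulVec, dotProduct, Fin.sum_univ_succ]
  ring

open Matrix in
theorem e8_pos (x : Fin 8 → ℤ) (hx : x ≠ 0) : 2 ≤ x ⬝ᵥ e8G *ᵥ x := by
  have h1 := e8_CC x x
  have h2 := e8_even x
  have h3 : e8C *ᵥ x ≠ 0 := by
    intro h
    apply hx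
    have e := fun i => congrFun h i
    have e0 := e 0; have e1 := e 1; have e2 := e 2; have e3 := e 3
    have e4 := e 4; have e5 := e 5; have e6 := e 6; have e7 := e 7
    simp [e8C, Matrix.mulVec, dotProduct, Fin.sum_univ_succ] at e0 e1 e2 e3 e4 e5 e6 e7
    funext i
    fin_cases i <;> simp <;> omega
  have h4 : (e8C *ᵥ x) ⬝ᵥ (e8C *ᵥ x) ≠ 0 := fun h => h3 (dotProduct_self_eq_zero.mp h)
  have h5 : 0 ≤ (e8C *ᵥ x) ⬝ᵥ (e8C *ᵥ x) :=
    Finset.sum_nonneg fun i _ => mul_self_nonneg _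
  obtain ⟨t, ht⟩ := h2
  omega

open Matrix in
/-- The `E₈` lattice. -/
def e8Data : LatData (Fin 8 → ℤ) 8 2 where
  B := Matrix.toLinearMap₂' ℤ e8G
  h := Matrix.mulVecLin e8H
  g := Matrix.mulVecLin (1 - e8H)
  symm x y := by
    have : e8Gᵀ = e8G := by decide +kernel
    simp only [Matrix.toLinearMap₂'_apply']
    rw [Matrix.dotProduct_mulVec, ← Matrix.mulVec_transpose, this, dotProduct_comm]
  even x := by
    simp only [Matrix.toLinearMap₂'_apply']
    exact e8_even x
  adj x y := by
    have : e8Hᵀ * e8G = e8G * (1 - e8H) := by decide +kernel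
    simp only [Matrix.toLinearMap₂'_apply', Matrix.mulVecLin_apply]
    rw [Matrix.mulVec_mulVec, ← this, ← Matrix.mulVec_mulVec, Matrix.dotProduct_mulVec x,
      Matrix.vecMul_transpose]
  add_hg x := by
    simp only [Matrix.mulVecLin_apply]
    rw [← Matrix.add_mulVec]; simp
  hg x := by
    have : e8H * (1 - e8H) = 2 := by decide +kernel
    simp only [Matrix.mulVecLin_apply]
    rw [Matrix.mulVec_mulVec, this, ← one_add_one_eq_two, Matrix.add_mulVec, Matrix.one_mulVec,
      ← two_smul ℤ x]
  gh x := by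
    have : (1 - e8H) * e8H = 2 := by decide +kernel
    simp only [Matrix.mulVecLin_apply]
    rw [Matrix.mulVec_mulVec, this, ← one_add_one_eq_two, Matrix.add_mulVec, Matrix.one_mulVec,
      ← two_smul ℤ x]
  dual f := by
    have hI : e8I * e8G = 1 := by decide +kernel
    refine ⟨(fun i => f (Pi.single i 1)) ᵥ* e8I, fun y => ?_⟩
    simp only [Matrix.toLinearMap₂'_apply']
    rw [Matrix.dotProduct_mulVec, Matrix.vecMul_vecMul, hI, Matrix.vecMul_one]
    conv_lhs => rw [LinearMap.pi_apply_eq_sum_univ f y]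
    simp only [dotProduct, smul_eq_mul]
    refine Finset.sum_congr rfl fun i _ => ?_
    rw [mul_comm]
    congr 2
    funext j
    simp [Pi.single_apply, eq_comm]
  mpos := by norm_num
  min x hx := by
    simp only [Matrix.toLinearMap₂'_apply']
    exact e8_pos x hx
  ex := ⟨Pi.single 0 1, by
    simp only [Matrix.toLinearMap₂'_apply']
    decide +kernel⟩
  free := inferInstance
  fin := inferInstance
  rank := by simp
  emb := by
    refine ⟨{ toFun := fun v j => (√2)⁻¹ * ((e8C *ᵥ v) j : ℤ)
              map_add' := fun a b => by
                funext j; simp [Matrix.mulVec_add, mul_add]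
              map_smul' := fun c a => by
                funext j; rw [Matrix.mulVec_smul]; simp; ring }, fun v w => ?_⟩
    have h' : (2 : ℝ) * ((v ⬝ᵥ e8G *ᵥ w : ℤ) : ℝ) =
        ∑ i, ((e8C *ᵥ v) i : ℝ) * ((e8C *ᵥ w) i : ℝ) := by
      exact_mod_cast e8_CC v w
    simp only [LinearMap.coe_mk, AddHom.coe_mk, Matrix.toLinearMap₂'_apply']
    have h2 : (√2)⁻¹ * (√2)⁻¹ = (2 : ℝ)⁻¹ := by
      rw [← mul_inv, Real.mul_self_sqrt (by norm_num)]
    have h3 : ∀ a b : ℝ, (√2)⁻¹ * a * ((√2)⁻¹ * b) = (2 : ℝ)⁻¹ * (a * b) := by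
      intro a b; rw [← h2]; ring
    simp only [h3, ← Finset.mul_sum]
    rw [← h']
    ring

theorem good_e8 : Good 8 2 := ⟨Fin 8 → ℤ, inferInstance, ⟨e8Data⟩⟩

theorem good_24 : Good 24 4 := good_e8.turyn 3 (by norm_num) (by intro t ⟨s, hs⟩ h; omega)
theorem good_32 : Good 32 4 := good_e8.turyn 4 (by norm_num) (by intro t ⟨s, hs⟩ h; omega)
theorem good_96 : Good 96 8 := good_24.turyn 4 (by norm_num) (by intro t ⟨s, hs⟩ h; omega)
theorem good_120 : Good 120 8 := good_24.turyn 5 (by norm_num) (by intro t ⟨s, hs⟩ h; omega)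
theorem good_128 : Good 128 8 := good_32.turyn 4 (by norm_num) (by intro t ⟨s, hs⟩ h; omega)

theorem Good.exists_lattice {r : ℕ} {m : ℤ} (H : Good r m) :
    ∃ L : Submodule ℤ (EuclideanSpace ℝ (Fin r)),
      IsLat L ∧ IsEvenLat L ∧ IsUnimodularLat L ∧ minNorm L = m := by
  obtain ⟨Λ, i1, ⟨D⟩⟩ := H
  obtain ⟨φ, hφ⟩ := D.emb
  have := D.free
  have := D.fin
  let ψ : Λ →ₗ[ℤ] EuclideanSpace ℝ (Fin r) :=
    { toFun := fun x => WithLp.toLp 2 (φ x)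
      map_add' := fun a b => by rw [map_add]; rfl
      map_smul' := fun c a => by
        ext i; simp }
  have hψ : ∀ x y, ⟪ψ x, ψ y⟫ = (D.B x y : ℝ) := by
    intro x y
    rw [hφ, PiLp.inner_apply]
    refine Finset.sum_congr rfl fun i _ => ?_
    simp [ψ, mul_comm]
  have hinj : Function.Injective ψ := by
    rw [← LinearMap.ker_eq_bot, LinearMap.ker_eq_bot']
    intro x hx
    apply D.eq_zero_of_self
    have h := hψ x x
    rw [hx, inner_zero_left] at h
    exact_mod_cast h.symm
  let b : Basis (Fin r) ℤ Λ := Module.finBasisOfFinrankEq ℤ Λ D.rank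
  let b' : Basis (Fin r) ℤ (LinearMap.range ψ) := b.map (LinearEquiv.ofInjective ψ hinj)
  have hb' : ∀ i, (b' i : EuclideanSpace ℝ (Fin r)) = ψ (b i) := fun i => by
    simp [b']
  let G : Matrix (Fin r) (Fin r) ℤ := Matrix.of fun i j => D.B (b i) (b j)
  have hGu : IsUnit G.det := by
    choose x hx using fun i => D.dual (b.coord i)
    let C : Matrix (Fin r) (Fin r) ℤ := Matrix.of fun i j => b.repr (x i) j
    have hCG : C * G = 1 := by
      ext i j
      have h1 : D.B (x i) (b j) = (C * G) i j := by
        conv_lhs => rw [← b.sum_repr (x i)]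
        simp only [map_sum, map_smul, LinearMap.sum_apply, LinearMap.smul_apply, smul_eq_mul,
          C, G, Matrix.mul_apply, Matrix.of_apply]
      rw [← h1, ← hx i (b j)]
      simp [Matrix.one_apply, Finsupp.single_apply, eq_comm]
    have := congrArg Matrix.det hCG
    rw [Matrix.det_mul, Matrix.det_one, mul_comm] at this
    exact IsUnit.of_mul_eq_one _ this
  let P : Matrix (Fin r) (Fin r) ℝ := Matrix.of fun i j => φ (b i) j
  have hGP : G.map (Int.castRingHom ℝ) = P * P.transpose := by
    ext i j
    simp [G, P, Matrix.mul_apply, hφ]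
  have hdet : (G.det : ℝ) = P.det ^ 2 := by
    have h := congrArg Matrix.det hGP
    rw [Matrix.det_mul, Matrix.det_transpose, ← RingHom.mapMatrix_apply, ← RingHom.map_det] at h
    rw [pow_two, ← h]
    rfl
  have hG1 : G.det = 1 := by
    rcases Int.isUnit_iff.mp hGu with h | h
    · exact h
    · rw [h] at hdet
      have := sq_nonneg P.det
      push_cast at hdet
      linarith
  have hP : P.det ≠ 0 := by
    intro h
    rw [hG1, h] at hdet
    norm_num at hdet
  refine ⟨LinearMap.range ψ, ⟨?_, ?_⟩, ⟨?_, ?_⟩, ?_, ?_⟩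
  · rw [LinearMap.range_eq_map]
    exact Submodule.FG.map _ this.fg_top
  · have hli : LinearIndependent ℝ P.row :=
      Matrix.linearIndependent_rows_of_det_ne_zero hP
    have hli2 : LinearIndependent ℝ (fun i => ψ (b i)) :=
      hli.map' (WithLp.linearEquiv 2 ℝ (Fin r → ℝ)).symm.toLinearMap (LinearEquiv.ker _)
    have hs := hli2.span_eq_top_of_card_eq_finrank' (by simp)
    rw [eq_top_iff, ← hs]
    apply Submodule.span_mono
    rintro _ ⟨i, rfl⟩
    exact ⟨b i, rfl⟩
  · rintro _ ⟨x, rfl⟩ _ ⟨y, rfl⟩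
    exact ⟨_, hψ x y⟩
  · rintro _ ⟨x, rfl⟩
    obtain ⟨t, ht⟩ := D.even x
    refine ⟨t, ?_⟩
    rw [hψ, ht]; push_cast; ring
  · refine ⟨r, b', ?_⟩
    have : (Matrix.of fun i j : Fin r => ⟪(b' i : EuclideanSpace ℝ (Fin r)), (b' j : _)⟫)
        = (Int.castRingHom ℝ).mapMatrix G := by
      ext i j
      simp [hb', hψ, G]
    rw [this, ← RingHom.map_det, hG1, map_one]
  · apply IsLeast.csInf_eq
    constructor
    · obtain ⟨x, hx⟩ := D.ex
      refine ⟨ψ x, ⟨x, rfl⟩, ?_, by rw [hψ, hx]⟩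
      intro h
      have h2 := hψ x x
      rw [h, inner_zero_left, hx] at h2
      have := D.mpos
      have h3 : m = 0 := by exact_mod_cast h2.symm
      omega
    · rintro _ ⟨_, ⟨x, rfl⟩, hx, rfl⟩
      rw [hψ]
      have : x ≠ 0 := by rintro rfl; simp at hx
      exact_mod_cast D.min x this

/-- for each `n ∈ {96, 120, 128}` there is a rank `n` even unimodular
lattice of minimum norm exactly 8. -/
theorem statement19 :
    ∀ n ∈ ({96, 120, 128} : Set ℕ),
      ∃ L : Submodule ℤ (EuclideanSpace ℝ (Fin n)),
        IsLat L ∧ IsEvenLat L ∧ IsUnimodularLat L ∧ minNorm L = 8 := by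
  intro n hn
  simp only [Set.mem_insert_iff, Set.mem_singleton_iff] at hn
  rcases hn with rfl | rfl | rfl
  · simpa using good_96.exists_lattice
  · simpa using good_120.exists_lattice
  · simpa using good_128.exists_lattice
end
end
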